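/- Suppose the pair (G, A) is stackable with normal form set C containing the empty word. Then a word w = a₁⋯aₙ ∈ List A lies in C if and only if w is freely reduced and, for each 1 ≤ i ≤ n, the edge (π(a₁⋯a_{i−1}), a_i) is degenerate with respect to C. -/

import Mathlib

namespace Stk

variable {G : Type*} [Group G] {A : Type*}

/-- Evaluation of a word over the generating alphabet in the group. -/
def eval (ρ : A → G) (w : List A) : G := (w.map ρ).prod

/-- `C` is a set of normal forms: evaluation restricted to `C` is a bijection onto `G`. -/
def IsNormalFormSet (ρ : A → G) (C : Set (List A)) : Prop :=
  ∀ g : G, ∃! w : List A, w ∈ C ∧ eval ρ w = g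

/-- The directed edge `(g, a)` of the Cayley graph is degenerate with respect to `C`. -/
def IsDegenerate (ρ : A → G) (ι : A → A) (C : Set (List A)) (e : G × A) : Prop :=
  ∃ y₁ y₂ : List A, y₁ ∈ C ∧ eval ρ y₁ = e.1 ∧ y₂ ∈ C ∧ eval ρ y₂ = e.1 * ρ e.2 ∧
    (y₁ ++ [e.2] = y₂ ∨ y₁ = y₂ ++ [ι e.2])

/-- A non-degenerate edge is recursive. -/
def IsRecursive (ρ : A → G) (ι : A → A) (C : Set (List A)) (e : G × A) : Prop :=
  ¬ IsDegenerate ρ ι C e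

/-- `e` is one of the edges along the path starting at `g` labeled by the word `w`. -/
def EdgeOnPath (ρ : A → G) (g : G) (w : List A) (e : G × A) : Prop :=
  ∃ i : Fin w.length, e = (g * eval ρ (w.take i), w.get i)

/-- A stackable structure for `(G, A)`: a normal form set `C` containing the empty word,
a well-founded strict partial order `lt` on the recursive edges, and a constant `k`,
such that each edge `(g, a)` admits a word of length at most `k` evaluating to `ρ a`,
each of whose edges along the path from `g` is degenerate or recursive and `lt`-below
`(g, a)`. -/
def IsStackableStructure (ρ : A → G) (ι : A → A) (C : Set (List A))
    (lt : G × A → G × A → Prop) (k : ℕ) : Prop :=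
  ([] : List A) ∈ C ∧ IsNormalFormSet ρ C ∧
  (∀ e e' : G × A, lt e e' → IsRecursive ρ ι C e ∧ IsRecursive ρ ι C e') ∧
  Transitive lt ∧ WellFounded lt ∧
  ∀ g : G, ∀ a : A, ∃ w : List A, w.length ≤ k ∧ eval ρ w = ρ a ∧
    ∀ e' : G × A, EdgeOnPath ρ g w e' → IsDegenerate ρ ι C e' ∨ lt e' (g, a)

/-- The pair `(G, A)` is stackable. -/
def IsStackable (ρ : A → G) (ι : A → A) : Prop :=
  ∃ (C : Set (List A)) (lt : G × A → G × A → Prop) (k : ℕ),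
    IsStackableStructure ρ ι C lt k

/-- A stacking map for a stackable structure. -/
def IsStackingMap (ρ : A → G) (ι : A → A) (C : Set (List A))
    (lt : G × A → G × A → Prop) (k : ℕ) (Φ : G × A → List A) : Prop :=
  ∀ e : G × A, IsRecursive ρ ι C e →
    eval ρ (Φ e) = ρ e.2 ∧ (Φ e).length ≤ k ∧
    ∀ e' : G × A, EdgeOnPath ρ e.1 (Φ e) e' → IsDegenerate ρ ι C e' ∨ lt e' e

/-- A stacking map extended by `Φ (g, a) = [a]` on degenerate edges. -/
def IsExtendedStackingMap (ρ : A → G) (ι : A → A) (C : Set (List A))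
    (lt : G × A → G × A → Prop) (k : ℕ) (Φ : G × A → List A) : Prop :=
  (∀ e : G × A, IsDegenerate ρ ι C e → Φ e = [e.2]) ∧ IsStackingMap ρ ι C lt k Φ

/-- A word is freely reduced if no letter is followed by its formal inverse. -/
def FreelyReduced (ι : A → A) (w : List A) : Prop :=
  List.Chain' (fun a b => b ≠ ι a) w

/-!
By well-founded induction along the order on edges, any set of vertices closed under traversing
degenerate edges is closed under traversing all edges. The vertices represented by a word of which
every prefix is a normal form make up such a set, and it contains `1`; so it is all of `G`, and by
uniqueness of normal forms `C` is prefix-closed. For a prefix-closed `C` the criterion is checked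
one letter at a time: if `u ∈ C` and the edge `(eval ρ u, a)` is degenerate, then either
`u ++ [a] ∈ C` or `u` ends in `ι a`, and the latter is exactly what free reduction excludes.
-/

theorem eval_nil (ρ : A → G) : eval ρ [] = 1 := by
  simp only [eval, List.map_nil, List.prod_nil]

theorem eval_concat (ρ : A → G) (u : List A) (a : A) : eval ρ (u ++ [a]) = eval ρ u * ρ a := by
  simp only [eval, List.map_append, List.prod_append, List.map_singleton, List.prod_singleton]

theorem FreelyReduced.nil (ι : A → A) : FreelyReduced ι [] :=
  List.isChain_nil

theorem freelyReduced_concat_iff {ι : A → A} {u : List A} {a : A} :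
    FreelyReduced ι (u ++ [a]) ↔ FreelyReduced ι u ∧ ∀ x ∈ u.getLast?, a ≠ ι x :=
  List.isChain_append.trans (and_congr .rfl (by simp))

section EdgeOnPath

variable {ρ : A → G} {g : G}

theorem not_edgeOnPath_nil (e : G × A) : ¬ EdgeOnPath ρ g [] e :=
  fun ⟨i, _⟩ => i.elim0

theorem edgeOnPath_concat_iff {w : List A} {a : A} {e : G × A} :
    EdgeOnPath ρ g (w ++ [a]) e ↔ EdgeOnPath ρ g w e ∨ e = (g * eval ρ w, a) := by
  constructor
  · rintro ⟨⟨i, hi⟩, rfl⟩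
    obtain hi' | rfl : i < w.length ∨ i = w.length := by
      rw [List.length_append, List.length_singleton] at hi
      omega
    · exact .inl ⟨⟨i, hi'⟩, by simp [List.take_append_of_le_length hi'.le, hi']⟩
    · exact .inr (by simp)
  · rintro (⟨i, rfl⟩ | rfl)
    · exact ⟨⟨i, by simp⟩, by simp [List.take_append_of_le_length i.2.le]⟩
    · exact ⟨⟨w.length, by simp⟩, by simp⟩

theorem forall_edgeOnPath_one_iff {w : List A} {P : G × A → Prop} :
    (∀ e, EdgeOnPath ρ 1 w e → P e) ↔ ∀ i : Fin w.length, P (eval ρ (w.take i), w.get i) := by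
  simp only [EdgeOnPath, one_mul, forall_exists_index, forall_eq_apply_imp_iff]

theorem mul_eval_mem_of_edgeOnPath {S : Set G} {w : List A}
    (hS : ∀ e, EdgeOnPath ρ g w e → e.1 ∈ S → e.1 * ρ e.2 ∈ S) (hg : g ∈ S) :
    g * eval ρ w ∈ S := by
  induction w using List.reverseRecOn with
  | nil => rwa [eval_nil, mul_one]
  | append_singleton w a ih =>
    rw [eval_concat, ← mul_assoc]
    exact hS (g * eval ρ w, a) (edgeOnPath_concat_iff.2 (.inr rfl))
      (ih fun e he => hS e (edgeOnPath_concat_iff.2 (.inl he)))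

end EdgeOnPath

/-- A flow relation is a well-founded relation on the edges along which every edge can be replaced
by a path of degenerate or smaller edges. This is the order in a stackable structure, with no bound
on the length of the replacing path. -/
def IsFlowRelation (ρ : A → G) (ι : A → A) (C : Set (List A)) (lt : G × A → G × A → Prop) :
    Prop :=
  WellFounded lt ∧ ∀ e : G × A, ∃ w : List A, eval ρ w = ρ e.2 ∧
    ∀ e', EdgeOnPath ρ e.1 w e' → IsDegenerate ρ ι C e' ∨ lt e' e

section Flow

variable {ρ : A → G} {ι : A → A} {C : Set (List A)} {lt : G × A → G × A → Prop}

theorem IsStackableStructure.isFlowRelation {k : ℕ} (h : IsStackableStructure ρ ι C lt k) :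
    IsFlowRelation ρ ι C lt := by
  obtain ⟨-, -, -, -, hwf, hpath⟩ := h
  refine ⟨hwf, fun e => ?_⟩
  obtain ⟨w, -, hw⟩ := hpath e.1 e.2
  exact ⟨w, hw⟩

theorem IsFlowRelation.mul_mem (hlt : IsFlowRelation ρ ι C lt) {S : Set G}
    (hS : ∀ e : G × A, IsDegenerate ρ ι C e → e.1 ∈ S → e.1 * ρ e.2 ∈ S) (e : G × A)
    (he : e.1 ∈ S) : e.1 * ρ e.2 ∈ S := by
  induction e using hlt.1.induction with
  | _ e ih =>
    obtain ⟨w, hw, hpath⟩ := hlt.2 e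
    rw [← hw]
    exact mul_eval_mem_of_edgeOnPath (fun e' he' => (hpath e' he').elim (hS e') (ih e')) he

theorem IsFlowRelation.eval_mem (hlt : IsFlowRelation ρ ι C lt) {S : Set G} (hone : 1 ∈ S)
    (hS : ∀ e : G × A, IsDegenerate ρ ι C e → e.1 ∈ S → e.1 * ρ e.2 ∈ S) (w : List A) :
    eval ρ w ∈ S := by
  simpa only [one_mul] using
    mul_eval_mem_of_edgeOnPath (fun e _ => hlt.mul_mem hS e) hone (w := w)

end Flow

/-- The largest prefix-closed subset of `C`; thus `C` is prefix-closed when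
`C ⊆ prefixCore C`. -/
def prefixCore (C : Set (List A)) : Set (List A) :=
  {w | ∀ u, u <+: w → u ∈ C}

section PrefixCore

variable {C : Set (List A)}

theorem prefixCore_subset : prefixCore C ⊆ C :=
  fun w hw => hw w w.prefix_rfl

theorem nil_mem_prefixCore (hnil : [] ∈ C) : [] ∈ prefixCore C :=
  fun _ hu => List.prefix_nil.1 hu ▸ hnil

theorem mem_prefixCore_of_prefix {u w : List A} (huw : u <+: w) (hw : w ∈ prefixCore C) :
    u ∈ prefixCore C :=
  fun v hv => hw v (hv.trans huw)

theorem concat_mem_prefixCore {u : List A} {a : A} (hu : u ∈ prefixCore C)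
    (hua : u ++ [a] ∈ C) : u ++ [a] ∈ prefixCore C := by
  intro v hv
  obtain rfl | hv := List.prefix_concat_iff.1 hv
  · exact hua
  · exact hu v hv

end PrefixCore

namespace IsNormalFormSet

variable {ρ : A → G} {ι : A → A} {C : Set (List A)}

theorem injOn_eval (hC : IsNormalFormSet ρ C) : Set.InjOn (eval ρ) C :=
  fun _ hu v hv h => (hC (eval ρ v)).unique ⟨hu, h⟩ ⟨hv, rfl⟩

theorem isDegenerate_iff (hC : IsNormalFormSet ρ C) {u : List A} (hu : u ∈ C) (a : A) :
    IsDegenerate ρ ι C (eval ρ u, a) ↔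
      u ++ [a] ∈ C ∨ ∃ v ∈ C, eval ρ v = eval ρ u * ρ a ∧ u = v ++ [ι a] := by
  constructor
  · rintro ⟨y, v, hy, hyu, hv, hvu, h⟩
    obtain rfl : y = u := hC.injOn_eval hy hu hyu
    obtain rfl | h := h
    · exact .inl hv
    · exact .inr ⟨v, hv, hvu, h⟩
  · rintro (hua | ⟨v, hv, hvu, h⟩)
    · exact ⟨u, u ++ [a], hu, rfl, hua, eval_concat ρ u a, .inl rfl⟩
    · exact ⟨u, v, hu, rfl, hv, hvu, .inr h⟩

theorem mul_mem_eval_image_prefixCore (hC : IsNormalFormSet ρ C) {e : G × A}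
    (hdeg : IsDegenerate ρ ι C e) (he : e.1 ∈ eval ρ '' prefixCore C) :
    e.1 * ρ e.2 ∈ eval ρ '' prefixCore C := by
  obtain ⟨g, a⟩ := e
  obtain ⟨u, hu, rfl⟩ := he
  obtain hua | ⟨v, -, hv, rfl⟩ := (hC.isDegenerate_iff (prefixCore_subset hu) a).1 hdeg
  · exact ⟨u ++ [a], concat_mem_prefixCore hu hua, eval_concat ρ u a⟩
  · exact ⟨v, mem_prefixCore_of_prefix (List.prefix_append _ _) hu, hv⟩

theorem subset_prefixCore (hC : IsNormalFormSet ρ C) (hnil : [] ∈ C)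
    {lt : G × A → G × A → Prop} (hlt : IsFlowRelation ρ ι C lt) : C ⊆ prefixCore C := by
  intro w hw
  have hone : 1 ∈ eval ρ '' prefixCore C := ⟨[], nil_mem_prefixCore hnil, eval_nil ρ⟩
  obtain ⟨u, hu, huw⟩ := hlt.eval_mem hone (fun _ => hC.mul_mem_eval_image_prefixCore) w
  exact hC.injOn_eval (prefixCore_subset hu) hw huw ▸ hu

theorem ne_of_concat_mem (hC : IsNormalFormSet ρ C) (hpre : C ⊆ prefixCore C)
    (hρι : ∀ a, ρ (ι a) = (ρ a)⁻¹) {u : List A} {a x : A} (hua : u ++ [a] ∈ C)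
    (hx : x ∈ u.getLast?) : a ≠ ι x := by
  rintro rfl
  obtain ⟨v, rfl⟩ := List.getLast?_eq_some_iff.1 hx
  have hv : v ∈ C := hpre hua v (by simp only [List.append_assoc, List.prefix_append])
  have heval : eval ρ v = eval ρ (v ++ [x] ++ [ι x]) := by
    rw [eval_concat, eval_concat, hρι, mul_inv_cancel_right]
  simpa using hC.injOn_eval hv hua heval

theorem concat_mem_iff (hC : IsNormalFormSet ρ C) (hpre : C ⊆ prefixCore C)
    (hinv : Function.Involutive ι) (hρι : ∀ a, ρ (ι a) = (ρ a)⁻¹) {u : List A} {a : A} :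
    u ++ [a] ∈ C ↔
      u ∈ C ∧ (∀ x ∈ u.getLast?, a ≠ ι x) ∧ IsDegenerate ρ ι C (eval ρ u, a) := by
  constructor
  · intro hua
    have hu : u ∈ C := hpre hua u (List.prefix_append _ _)
    exact ⟨hu, fun _ => hC.ne_of_concat_mem hpre hρι hua, (hC.isDegenerate_iff hu a).2 (.inl hua)⟩
  · rintro ⟨hu, hred, hdeg⟩
    obtain hua | ⟨v, -, -, rfl⟩ := (hC.isDegenerate_iff hu a).1 hdeg
    · exact hua
    · exact absurd (hinv a).symm (hred (ι a) List.getLast?_concat)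

theorem mem_iff_of_subset_prefixCore (hC : IsNormalFormSet ρ C) (hpre : C ⊆ prefixCore C)
    (hnil : [] ∈ C) (hinv : Function.Involutive ι) (hρι : ∀ a, ρ (ι a) = (ρ a)⁻¹) (w : List A) :
    w ∈ C ↔ FreelyReduced ι w ∧ ∀ e, EdgeOnPath ρ 1 w e → IsDegenerate ρ ι C e := by
  induction w using List.reverseRecOn with
  | nil => exact iff_of_true hnil ⟨.nil ι, fun e he => absurd he (not_edgeOnPath_nil e)⟩
  | append_singleton u a ih =>
    simp only [hC.concat_mem_iff hpre hinv hρι, ih, freelyReduced_concat_iff,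
      edgeOnPath_concat_iff, one_mul, or_imp, forall_and, forall_eq]
    tauto

end IsNormalFormSet

theorem mem_normalForms_iff_of_stackable_general {ρ : A → G} {ι : A → A}
    (hinv : Function.Involutive ι) (hρι : ∀ a, ρ (ι a) = (ρ a)⁻¹) {C : Set (List A)}
    (hnil : [] ∈ C) (hC : IsNormalFormSet ρ C) {lt : G × A → G × A → Prop}
    (hlt : IsFlowRelation ρ ι C lt) (w : List A) :
    w ∈ C ↔ FreelyReduced ι w ∧
      ∀ i : Fin w.length, IsDegenerate ρ ι C (eval ρ (w.take i), w.get i) := by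
  rw [← forall_edgeOnPath_one_iff]
  exact hC.mem_iff_of_subset_prefixCore (hC.subset_prefixCore hnil hlt) hnil hinv hρι w

/-- a word lies in the normal form set of a stackable structure iff it is
freely reduced and all edges along its path from the identity are degenerate. -/
theorem mem_normalForms_iff_of_stackable {G : Type*} [Group G] {A : Type*} [Fintype A]
    (ρ : A → G) (ι : A → A)
    (hgen : Subgroup.closure (Set.range ρ) = ⊤)
    (hne : ∀ a : A, ρ a ≠ 1)
    (hinv : Function.Involutive ι)
    (hρι : ∀ a : A, ρ (ι a) = (ρ a)⁻¹)
    (C : Set (List A)) (lt : G × A → G × A → Prop) (k : ℕ)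
    (hstk : IsStackableStructure ρ ι C lt k) :
    ∀ w : List A, w ∈ C ↔
      (FreelyReduced ι w ∧
        ∀ i : Fin w.length, IsDegenerate ρ ι C (eval ρ (w.take i), w.get i)) :=
  mem_normalForms_iff_of_stackable_general hinv hρι hstk.1 hstk.2.1 hstk.isFlowRelation

end Stk
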